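/- arXiv:math/0409520 — 2 statements merged into one kernel-verified Lean document; each statement's English description precedes it below -/
import Mathlib

section
/- Commensurability is an equivalence relation on the set of ℚ-lattices in ℝⁿ: it is reflexive, symmetric, and transitive. (Transitivity: if (Λ₁,φ₁) is commensurable with (Λ₂,φ₂) and (Λ₂,φ₂) is commensurable with (Λ₃,φ₃), then (Λ₁,φ₁) is commensurable with (Λ₃,φ₃).) -/
set_option synthInstance.maxHeartbeats 1000000
set_option maxHeartbeats 1000000

/-- The subgroup `ℤⁿ ⊂ ℚⁿ` of integer vectors. -/
def intVecs (n : ℕ) : AddSubgroup (Fin n → ℚ) where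
  carrier := {v | ∀ i, ∃ m : ℤ, v i = m}
  add_mem' := by
    rintro a b ha hb i
    obtain ⟨p, hp⟩ := ha i
    obtain ⟨q, hq⟩ := hb i
    exact ⟨p + q, by simp [hp, hq]⟩
  zero_mem' := fun i => ⟨0, by simp⟩
  neg_mem' := by
    rintro a ha i
    obtain ⟨p, hp⟩ := ha i
    exact ⟨-p, by simp [hp]⟩

/-- A `ℚ`-lattice in `ℝⁿ`: a lattice `Λ ⊂ ℝⁿ` (the `ℤ`-span of an `ℝ`-basis) together with a
homomorphism `φ : ℚⁿ/ℤⁿ → ℚΛ/Λ` (encoded as a homomorphism into `ℝⁿ/Λ` landing in the image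
of the `ℚ`-span `ℚΛ` of `Λ`). -/
structure QLatticeN (n : ℕ) where
  L : AddSubgroup (Fin n → ℝ)
  exists_basis : ∃ b : Module.Basis (Fin n) ℝ (Fin n → ℝ), L = AddSubgroup.closure (Set.range ⇑b)
  phi : ((Fin n → ℚ) ⧸ intVecs n) →+ ((Fin n → ℝ) ⧸ L)
  phi_mem : ∀ x, phi x ∈ AddSubgroup.map (QuotientAddGroup.mk' L)
      (Submodule.span ℚ ((L : Set (Fin n → ℝ)))).toAddSubgroup

/-- Commensurability of `ℚ`-lattices: `ℚΛ₁ = ℚΛ₂` and `φ₁ = φ₂ mod Λ₁ + Λ₂`. -/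
def QLatComm {n : ℕ} (L₁ L₂ : QLatticeN n) : Prop :=
  Submodule.span ℚ ((L₁.L : Set (Fin n → ℝ))) = Submodule.span ℚ ((L₂.L : Set (Fin n → ℝ))) ∧
  ∀ v : (Fin n → ℚ) ⧸ intVecs n,
    QuotientAddGroup.map L₁.L (L₁.L ⊔ L₂.L) (AddMonoidHom.id _)
        (fun x hx => AddSubgroup.mem_comap.mpr (AddSubgroup.mem_sup_left hx)) (L₁.phi v) =
      QuotientAddGroup.map L₂.L (L₁.L ⊔ L₂.L) (AddMonoidHom.id _)
        (fun x hx => AddSubgroup.mem_comap.mpr (AddSubgroup.mem_sup_right hx)) (L₂.phi v)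

theorem qlat_exists_mul_mem {n : ℕ} (L : AddSubgroup (Fin n → ℝ)) (x : Fin n → ℝ)
    (hx : x ∈ Submodule.span ℚ (L : Set (Fin n → ℝ))) : ∃ m : ℕ, m ≠ 0 ∧ m • x ∈ L := by
  induction hx using Submodule.span_induction with
  | mem x h => exact ⟨1, one_ne_zero, by simpa using h⟩
  | zero => exact ⟨1, one_ne_zero, by simp⟩
  | add x y _ _ hx hy =>
    obtain ⟨a, ha, hax⟩ := hx
    obtain ⟨b, hb, hby⟩ := hy
    refine ⟨a * b, mul_ne_zero ha hb, ?_⟩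
    have e : (a * b) • (x + y) = b • (a • x) + a • (b • y) := by
      rw [smul_add, smul_smul, smul_smul, mul_comm b a]
    rw [e]
    exact L.add_mem (L.nsmul_mem hax b) (L.nsmul_mem hby a)
  | smul q x _ hx =>
    obtain ⟨a, ha, hax⟩ := hx
    refine ⟨q.den * a, mul_ne_zero q.den_nz ha, ?_⟩
    have e : (q.den * a) • (q • x) = q.num • (a • x) := by
      have hq : (q.den : ℝ) * (q : ℝ) = (q.num : ℝ) := by
        exact_mod_cast Rat.den_mul_eq_num q
      ext i
      simp only [Pi.smul_apply, nsmul_eq_mul, zsmul_eq_mul, Rat.smul_def, Nat.cast_mul,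
        Pi.mul_apply, Pi.natCast_apply]
      rw [← hq]
      ring
    rw [e]
    exact L.zsmul_mem hax _

theorem qlat_exists_uniform {n : ℕ} (A B : QLatticeN n)
    (h : Submodule.span ℚ (A.L : Set (Fin n → ℝ)) = Submodule.span ℚ (B.L : Set (Fin n → ℝ))) :
    ∃ N : ℕ, N ≠ 0 ∧ ∀ x ∈ B.L, N • x ∈ A.L := by
  obtain ⟨b, hb⟩ := B.exists_basis
  have hm : ∀ i, ∃ m : ℕ, m ≠ 0 ∧ m • b i ∈ A.L := by
    intro i
    apply qlat_exists_mul_mem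
    rw [h]
    apply Submodule.subset_span
    rw [hb]
    exact AddSubgroup.subset_closure ⟨i, rfl⟩
  choose m hm0 hm1 using hm
  refine ⟨∏ i, m i, Finset.prod_ne_zero_iff.mpr fun i _ => hm0 i, ?_⟩
  intro x hx
  rw [hb] at hx
  induction hx using AddSubgroup.closure_induction with
  | mem x hx =>
    obtain ⟨i, rfl⟩ := hx
    obtain ⟨c, hc⟩ := Finset.dvd_prod_of_mem m (Finset.mem_univ i)
    rw [hc, mul_comm, mul_smul]
    exact A.L.nsmul_mem (hm1 i) c
  | zero => simp
  | add x y _ _ hx hy => rw [smul_add]; exact A.L.add_mem hx hy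
  | neg x _ hx => rw [smul_neg]; exact A.L.neg_mem hx

theorem qlat_comm_iff {n : ℕ} (A B : QLatticeN n) : QLatComm A B ↔
    Submodule.span ℚ (A.L : Set (Fin n → ℝ)) = Submodule.span ℚ (B.L : Set (Fin n → ℝ)) ∧
    ∀ (v : (Fin n → ℚ) ⧸ intVecs n) (x y : Fin n → ℝ),
      A.phi v = QuotientAddGroup.mk x → B.phi v = QuotientAddGroup.mk y →
      -x + y ∈ A.L ⊔ B.L := by
  unfold QLatComm
  refine and_congr_right fun _ => forall_congr' fun v => ?_
  constructor
  · intro h x y hx hy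
    rw [hx, hy] at h
    exact QuotientAddGroup.eq.mp h
  · intro h
    obtain ⟨x, hx⟩ := QuotientAddGroup.mk_surjective (A.phi v)
    obtain ⟨y, hy⟩ := QuotientAddGroup.mk_surjective (B.phi v)
    rw [← hx, ← hy]
    exact QuotientAddGroup.eq.mpr (h x y hx.symm hy.symm)

/-- commensurability is an equivalence relation on the set of `ℚ`-lattices
in `ℝⁿ`. -/
theorem stmt9 (n : ℕ) : Equivalence (fun L₁ L₂ : QLatticeN n => QLatComm L₁ L₂) := by
  refine ⟨fun A => ⟨rfl, fun v => rfl⟩, ?_, ?_⟩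
  · intro A B h
    rw [qlat_comm_iff] at h ⊢
    refine ⟨h.1.symm, fun v x y hx hy => ?_⟩
    have := neg_mem (h.2 v y x hy hx)
    rw [sup_comm]
    convert this using 1
    abel
  · intro A B C hAB hBC
    rw [qlat_comm_iff] at hAB hBC ⊢
    refine ⟨hAB.1.trans hBC.1, fun v x' z' hx' hz' => ?_⟩
    obtain ⟨N, hN, hNB⟩ := qlat_exists_uniform A B hAB.1
    obtain ⟨w, rfl⟩ : ∃ w : (Fin n → ℚ) ⧸ intVecs n, v = N • w := by
      obtain ⟨a, rfl⟩ := QuotientAddGroup.mk_surjective v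
      refine ⟨QuotientAddGroup.mk ((N : ℚ)⁻¹ • a), ?_⟩
      rw [← QuotientAddGroup.mk_nsmul]
      congr 1
      have hN' : (N : ℚ) ≠ 0 := by exact_mod_cast hN
      ext i
      simp [hN']
    obtain ⟨x, hx⟩ := QuotientAddGroup.mk_surjective (A.phi w)
    obtain ⟨y, hy⟩ := QuotientAddGroup.mk_surjective (B.phi w)
    obtain ⟨z, hz⟩ := QuotientAddGroup.mk_surjective (C.phi w)
    rw [map_nsmul, ← hx, ← QuotientAddGroup.mk_nsmul] at hx'
    rw [map_nsmul, ← hz, ← QuotientAddGroup.mk_nsmul] at hz'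
    have h1 := QuotientAddGroup.eq.mp hx'
    have h3 := QuotientAddGroup.eq.mp hz'
    obtain ⟨a, ha, b, hb, hab⟩ := AddSubgroup.mem_sup.mp (hAB.2 w x y hx.symm hy.symm)
    obtain ⟨b', hb', c, hc, hbc⟩ := AddSubgroup.mem_sup.mp (hBC.2 w y z hy.symm hz.symm)
    have e : -x' + z' = (-(-(N • x) + x') + (N • a + N • b + N • b')) +
        (N • c + (-(N • z) + z')) := by
      have e1 : N • a + N • b = -(N • x) + N • y := by
        rw [← smul_add, hab, smul_add, smul_neg]
      have e2 : N • b' + N • c = -(N • y) + N • z := by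
        rw [← smul_add, hbc, smul_add, smul_neg]
      have e3 : N • c = -(N • y) + N • z - N • b' := by rw [← e2]; abel
      rw [e1, e3]
      abel
    rw [e]
    refine add_mem (AddSubgroup.mem_sup_left ?_) (AddSubgroup.mem_sup_right ?_)
    · exact add_mem (neg_mem h1)
        (add_mem (add_mem (A.L.nsmul_mem ha N) (hNB b hb)) (hNB b' hb'))
    · exact add_mem (C.L.nsmul_mem hc N) h3
end

section
/- If (Λ₁,φ₁) and (Λ₂,φ₂) are invertible ℚ-lattices in ℝⁿ that are commensurable, then Λ₁ = Λ₂ and φ₁ = φ₂. Hence two invertible ℚ-lattices are commensurable if and only if they are equal. -/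
set_option synthInstance.maxHeartbeats 1000000
set_option maxHeartbeats 1000000

/-- A `ℚ`-lattice is invertible if `φ` is an isomorphism onto `ℚΛ/Λ`. -/
def QLatticeN.Invertible {n : ℕ} (L : QLatticeN n) : Prop :=
  Function.Injective L.phi ∧
  ∀ y ∈ AddSubgroup.map (QuotientAddGroup.mk' L.L)
      (Submodule.span ℚ ((L.L : Set (Fin n → ℝ)))).toAddSubgroup,
    ∃ x, L.phi x = y

theorem exists_nsmul_mem_of_mem_span {n : ℕ} (L : AddSubgroup (Fin n → ℝ)) (x : Fin n → ℝ)
    (hx : x ∈ Submodule.span ℚ (L : Set (Fin n → ℝ))) : ∃ N : ℕ, 0 < N ∧ N • x ∈ L := by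
  induction hx using Submodule.span_induction with
  | mem x h => exact ⟨1, one_pos, by simpa using h⟩
  | zero => exact ⟨1, one_pos, by simp⟩
  | add x y _ _ hx hy =>
    obtain ⟨a, ha, hax⟩ := hx
    obtain ⟨b, hb, hby⟩ := hy
    refine ⟨a * b, Nat.mul_pos ha hb, ?_⟩
    rw [nsmul_add]
    refine L.add_mem ?_ ?_
    · rw [mul_comm, mul_nsmul']
      exact L.nsmul_mem hax b
    · rw [mul_nsmul']
      exact L.nsmul_mem hby a
  | smul q x _ hx =>
    obtain ⟨a, ha, hax⟩ := hx
    refine ⟨q.den * a, Nat.mul_pos q.den_pos ha, ?_⟩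
    have : (q.den * a) • (q • x) = q.num • (a • x) := by
      have hq : (q.den : ℝ) * (q : ℝ) = q.num := by
        exact_mod_cast Rat.den_mul_eq_num q
      ext i
      simp only [Pi.smul_apply]
      simp only [nsmul_eq_mul, zsmul_eq_mul, Rat.smul_def, Nat.cast_mul]
      rw [← hq]
      ring
    rw [this]
    exact L.zsmul_mem hax _

theorem exists_uniform_nsmul_mem {n : ℕ} (L₁ L₂ : QLatticeN n)
    (h : Submodule.span ℚ (L₁.L : Set (Fin n → ℝ)) ≤ Submodule.span ℚ (L₂.L : Set (Fin n → ℝ))) :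
    ∃ N : ℕ, 0 < N ∧ ∀ x ∈ L₁.L, N • x ∈ L₂.L := by
  obtain ⟨b, hb⟩ := L₁.exists_basis
  have hbm : ∀ i, b i ∈ L₁.L := fun i => by
    rw [hb]; exact AddSubgroup.subset_closure ⟨i, rfl⟩
  choose N hN hNb using fun i => exists_nsmul_mem_of_mem_span L₂.L (b i)
    (h (Submodule.subset_span (hbm i)))
  refine ⟨∏ i, N i, Finset.prod_pos fun i _ => hN i, fun x hx => ?_⟩
  rw [hb] at hx
  induction hx using AddSubgroup.closure_induction with
  | mem x hx =>
    obtain ⟨i, rfl⟩ := hx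
    obtain ⟨c, hc⟩ := Finset.dvd_prod_of_mem N (Finset.mem_univ i)
    rw [hc, mul_comm, mul_nsmul']
    exact L₂.L.nsmul_mem (hNb i) c
  | zero => simp
  | add x y _ _ hx hy => rw [nsmul_add]; exact L₂.L.add_mem hx hy
  | neg x _ hx => rw [smul_neg]; exact L₂.L.neg_mem hx

theorem le_of_comm {n : ℕ} (L₁ L₂ : QLatticeN n) (h₁ : L₁.Invertible)
    (h : Submodule.span ℚ (L₁.L : Set (Fin n → ℝ)) ≤ Submodule.span ℚ (L₂.L : Set (Fin n → ℝ)))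
    (hc : ∀ (v : (Fin n → ℚ) ⧸ intVecs n) (a b : Fin n → ℝ),
      L₁.phi v = (a : (Fin n → ℝ) ⧸ L₁.L) → L₂.phi v = (b : (Fin n → ℝ) ⧸ L₂.L) →
      -a + b ∈ L₁.L ⊔ L₂.L) : L₁.L ≤ L₂.L := by
  intro l hl
  obtain ⟨N, hN, hNL⟩ := exists_uniform_nsmul_mem L₁ L₂ h
  let a : Fin n → ℝ := (N : ℚ)⁻¹ • l
  have ha : N • a = l := by
    have : (N : ℝ) ≠ 0 := by positivity
    ext i
    simp [a, Rat.smul_def, this]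
  obtain ⟨v, hv⟩ := h₁.2 (a : (Fin n → ℝ) ⧸ L₁.L)
    ⟨a, Submodule.smul_mem _ _ (Submodule.subset_span hl), rfl⟩
  have hNv : N • v = 0 := by
    apply h₁.1
    rw [map_nsmul, hv, map_zero, ← QuotientAddGroup.mk_nsmul, ha]
    exact (QuotientAddGroup.eq_zero_iff l).2 hl
  obtain ⟨b, hb⟩ := QuotientAddGroup.mk_surjective (L₂.phi v)
  have hbN : N • b ∈ L₂.L := by
    rw [← QuotientAddGroup.eq_zero_iff, QuotientAddGroup.mk_nsmul, hb, ← map_nsmul, hNv, map_zero]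
  obtain ⟨y, hy, z, hz, hyz⟩ := AddSubgroup.mem_sup.1 (hc v a b hv hb.symm)
  have : l = N • b - (N • y + N • z) := by
    rw [← nsmul_add, hyz, ← ha, nsmul_add, smul_neg]; abel
  rw [this]
  exact L₂.L.sub_mem hbN (L₂.L.add_mem (hNL y hy) (L₂.L.nsmul_mem hz N))

theorem eq_of_comm {n : ℕ} (L₁ L₂ : QLatticeN n)
    (h₁ : L₁.Invertible) (h₂ : L₂.Invertible) (h : QLatComm L₁ L₂) : L₁ = L₂ := by
  obtain ⟨hs, hc⟩ := h
  have hc' : ∀ (v : (Fin n → ℚ) ⧸ intVecs n) (a b : Fin n → ℝ),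
      L₁.phi v = (a : (Fin n → ℝ) ⧸ L₁.L) → L₂.phi v = (b : (Fin n → ℝ) ⧸ L₂.L) →
      -a + b ∈ L₁.L ⊔ L₂.L := by
    intro v a b ha hb
    have := hc v
    rw [ha, hb] at this
    exact QuotientAddGroup.eq.1 this
  have hL : L₁.L = L₂.L := by
    apply le_antisymm
    · exact le_of_comm L₁ L₂ h₁ hs.le hc'
    · refine le_of_comm L₂ L₁ h₂ hs.ge fun v a b ha hb => ?_
      have := neg_mem (hc' v b a hb ha)
      rw [sup_comm]
      simpa [add_comm] using this
  clear hc hs h₁ h₂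
  obtain ⟨L, e₁, p₁, m₁⟩ := L₁
  obtain ⟨L', e₂, p₂, m₂⟩ := L₂
  dsimp only at hL hc'
  subst hL
  have : p₁ = p₂ := by
    refine DFunLike.ext _ _ fun v => ?_
    obtain ⟨a, ha⟩ := QuotientAddGroup.mk_surjective (p₁ v)
    obtain ⟨b, hb⟩ := QuotientAddGroup.mk_surjective (p₂ v)
    rw [← ha, ← hb]
    apply QuotientAddGroup.eq.2
    simpa using hc' v a b ha.symm hb.symm
  subst this
  rfl

/-- commensurable invertible `ℚ`-lattices are equal; hence two invertible
`ℚ`-lattices are commensurable if and only if they are equal. -/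
theorem stmt10 (n : ℕ) (L₁ L₂ : QLatticeN n)
    (h₁ : L₁.Invertible) (h₂ : L₂.Invertible) :
    (QLatComm L₁ L₂ → L₁.L = L₂.L ∧ L₁ = L₂) ∧ (QLatComm L₁ L₂ ↔ L₁ = L₂) := by
  refine ⟨fun h => ?_, fun h => eq_of_comm L₁ L₂ h₁ h₂ h, ?_⟩
  · have := eq_of_comm L₁ L₂ h₁ h₂ h
    exact ⟨by rw [this], this⟩
  · rintro rfl
    exact ⟨rfl, fun v => rfl⟩
end
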